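/- Suppose 𝒯 is locally compact, let ν be a Borel probability measure on 𝒳 with ν({0}) = 0 that is regularly varying with scaling sequence (a_n) and limit measure μ, and let ν_n denote the Borel measure on 𝒳 given by ν_n(A) = n·ν({x : a_n⁻¹•x ∈ A}). Let k ≥ 0, let r > 0 satisfy μ({x : d(0,x) = r}) = 0, and let f : 𝒯×𝒳 → [0,∞) be bounded Lipschitz continuous with f(t,x) = 0 whenever d(0,x) < r. Define (L_{k+1,n}f)(t_1,…,t_{k+1}) = ∫_{{d(0,x)≥r}^{k+1}} e^{−Σ_{i=1}^{k+1} f(t_i,x_i)} ν_n(dx_1)⋯ν_n(dx_{k+1}) and (L_{k+1}f)(t_1,…,t_{k+1}) = ∫_{{d(0,x)≥r}^{k+1}} e^{−Σ_{i=1}^{k+1} f(t_i,x_i)} μ(dx_1)⋯μ(dx_{k+1}). Then L_{k+1,n}f → L_{k+1}f uniformly on 𝒯^{k+1} as n → ∞, and the sequence (L_{k+1,n}f)_{n ≥ 1} is uniformly bounded on 𝒯^{k+1}. -/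

import Mathlib

open MeasureTheory Filter Metric Topology

open scoped ENNReal NNReal BoundedContinuousFunction

/-!
By Fubini `L_{k+1,n} f (t₁, …, t_{k+1})` is the product of the integrals of `exp (-f (tᵢ, ·))` over
`S = {d(0, x) ≥ r}`. The set `S` avoids a neighbourhood of the origin and its boundary is `μ`-null,
so regular variation makes the finite measures `ν_n|S` converge weakly to `μ|S`: multiply by a
cutoff equal to `1` on `S` and vanishing near the origin, and apply the portmanteau theorem. The
Lévy–Prokhorov metric metrises this convergence and controls integrals of functions with a common
bound and a common Lipschitz constant, such as the `exp (-f (t, ·))`, uniformly in `t`; products of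
bounded uniformly convergent functions then converge uniformly.
-/

section UniformConvergence

lemma tendstoUniformly_continuous_comp {ι T E β : Type*} {L : Filter ι} [PseudoMetricSpace E]
    [ProperSpace E] [UniformSpace β] {F : ι → T → E} {G : T → E} (hF : TendstoUniformly F G L)
    (hG : Bornology.IsBounded (Set.range G)) {φ : E → β} (hφ : Continuous φ) :
    TendstoUniformly (fun n t => φ (F n t)) (fun t => φ (G t)) L := by
  have hφ_unif : UniformContinuousOn φ (cthickening 1 (Set.range G)) :=
    (isCompact_of_isClosed_isBounded isClosed_cthickening
      hG.cthickening).uniformContinuousOn_of_continuous hφ.continuousOn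
  refine hφ_unif.comp_tendstoUniformly_eventually ?_
    (fun t => self_subset_cthickening _ (Set.mem_range_self t)) hF
  filter_upwards [Metric.tendstoUniformly_iff.1 hF 1 one_pos] with n hn t
  exact mem_cthickening_of_dist_le _ _ _ _ (Set.mem_range_self t) (dist_comm (G t) _ ▸ (hn t).le)

lemma thickening_superlevelSet_subset {X : Type*} [PseudoMetricSpace X] {f : X → ℝ} {K : ℝ≥0}
    (hf : LipschitzWith K f) (ε t : ℝ) :
    thickening ε {x | t ≤ f x} ⊆ {x | t ≤ f x + K * ε} := by
  intro x hx
  obtain ⟨y, hty, hxy⟩ := mem_thickening_iff.1 hx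
  have hfyx : f y ≤ f x + K * dist x y := by
    rw [dist_comm]
    exact hf.le_add_mul y x
  calc t ≤ f y := hty
    _ ≤ f x + K * dist x y := hfyx
    _ ≤ f x + K * ε := by gcongr

variable {ι T X : Type*} [PseudoMetricSpace X] [MeasurableSpace X] [OpensMeasurableSpace X]
  {L : Filter ι}

lemma integral_le_add_of_levyProkhorovEDist_lt (μ ν : Measure X) [IsFiniteMeasure μ]
    [IsFiniteMeasure ν] {ε : ℝ} (hε : 0 < ε) (hμν : levyProkhorovEDist μ ν < ENNReal.ofReal ε)
    {K : ℝ≥0} {f : X →ᵇ ℝ} (hf : LipschitzWith K f) (hf0 : 0 ≤ f) :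
    ∫ x, f x ∂μ ≤ ∫ x, f x ∂ν + ε * (K * ν.real Set.univ + ‖f‖) := by
  have integrableOn_superlevel {b : ℝ} {S : ℝ → Set X} (hS : Antitone S) :
      IntegrableOn (fun t => ν.real (S t)) (Set.Ioc 0 b) :=
    Measure.integrableOn_of_bounded (M := ν.real Set.univ) measure_Ioc_lt_top.ne
      (Antitone.measurable fun _ _ hst => measureReal_mono (hS hst)).aestronglyMeasurable
      (.of_forall fun t => by
        rw [Real.norm_of_nonneg measureReal_nonneg]
        exact measureReal_mono (Set.subset_univ _))
  have hKε : 0 ≤ K * ε := by positivity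
  have layer_cake : ∫ t in Set.Ioc 0 (‖f‖ + K * ε), ν.real {x | t ≤ f x + K * ε} =
      ∫ x, f x ∂ν + K * ε * ν.real Set.univ := by
    have hint : Integrable (fun x => f x + K * ε) ν := (f.integrable ν).add (integrable_const _)
    rw [← hint.integral_eq_integral_Ioc_meas_le (.of_forall fun x => add_nonneg (hf0 x) hKε)
      (.of_forall fun x => add_le_add_left ((le_abs_self _).trans (f.norm_coe_le_norm x)) _),
      integral_add (f.integrable ν) (integrable_const _), integral_const, smul_eq_mul, mul_comm]
  have superlevel_antitone {g : X → ℝ} : Antitone fun t => {x | t ≤ g x} :=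
    fun _ _ hst _ hx => hst.trans hx
  calc ∫ x, f x ∂μ
      ≤ (∫ t in Set.Ioc 0 ‖f‖, ν.real (thickening ε {x | t ≤ f x})) + ε * ‖f‖ :=
        BoundedContinuousFunction.integral_le_of_levyProkhorovEDist_lt μ ν hε hμν f
          (.of_forall hf0)
    _ ≤ (∫ t in Set.Ioc 0 ‖f‖, ν.real {x | t ≤ f x + K * ε}) + ε * ‖f‖ := by
        gcongr ?_ + _
        exact setIntegral_mono
          (integrableOn_superlevel fun _ _ hst =>
            thickening_subset_of_subset ε (superlevel_antitone hst))
          (integrableOn_superlevel superlevel_antitone)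
          fun t => measureReal_mono (thickening_superlevelSet_subset hf ε t)
    _ ≤ (∫ t in Set.Ioc 0 (‖f‖ + K * ε), ν.real {x | t ≤ f x + K * ε}) + ε * ‖f‖ := by
        gcongr ?_ + _
        exact setIntegral_mono_set (integrableOn_superlevel superlevel_antitone)
          (.of_forall fun t => measureReal_nonneg)
          (Set.Ioc_subset_Ioc_right (le_add_of_nonneg_right hKε)).eventuallyLE
    _ = ∫ x, f x ∂ν + ε * (K * ν.real Set.univ + ‖f‖) := by
        rw [layer_cake]
        ring

lemma abs_integral_sub_integral_le_of_levyProkhorovEDist_lt {μ ν : Measure X}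
    [IsProbabilityMeasure μ] [IsProbabilityMeasure ν] {ε : ℝ} (hε : 0 < ε)
    (hμν : levyProkhorovEDist μ ν < ENNReal.ofReal ε) {K : ℝ≥0} {f : X →ᵇ ℝ}
    (hf : LipschitzWith K f) :
    |∫ x, f x ∂μ - ∫ x, f x ∂ν| ≤ ε * (K + 2 * ‖f‖) := by
  set g : X →ᵇ ℝ := f + .const X ‖f‖
  have hgK : LipschitzWith K g := by
    convert! hf.add (LipschitzWith.const ‖f‖) using 1
    exact (add_zero K).symm
  have hg0 : 0 ≤ g := fun x => by
    simpa [g] using neg_le_iff_add_nonneg.1 (neg_le_of_abs_le (f.norm_coe_le_norm x))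
  have hg_norm : ‖g‖ ≤ 2 * ‖f‖ := by
    rw [two_mul]
    exact (norm_add_le _ _).trans
      (by gcongr; simpa using BoundedContinuousFunction.norm_const_le (α := X) ‖f‖)
  have hg_integral (m : Measure X) [IsProbabilityMeasure m] :
      ∫ x, g x ∂m = ∫ x, f x ∂m + ‖f‖ := by
    simp [g, integral_add (f.integrable m) (integrable_const _)]
  have integral_sub_le (m m' : Measure X) [IsProbabilityMeasure m] [IsProbabilityMeasure m']
      (h : levyProkhorovEDist m m' < ENNReal.ofReal ε) :
      ∫ x, f x ∂m - ∫ x, f x ∂m' ≤ ε * (K + 2 * ‖f‖) := by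
    calc ∫ x, f x ∂m - ∫ x, f x ∂m' = ∫ x, g x ∂m - ∫ x, g x ∂m' := by
          rw [hg_integral, hg_integral, add_sub_add_right_eq_sub]
      _ ≤ ε * (K + ‖g‖) := by
          simpa [sub_le_iff_le_add, add_comm] using
            integral_le_add_of_levyProkhorovEDist_lt m m' hε h hgK hg0
      _ ≤ ε * (K + 2 * ‖f‖) := by gcongr
  exact abs_sub_le_iff.2 ⟨integral_sub_le μ ν hμν,
    integral_sub_le ν μ (levyProkhorovEDist_comm μ ν ▸ hμν)⟩

variable [TopologicalSpace.SeparableSpace X] {g : T → X →ᵇ ℝ} {K : ℝ≥0} {C : ℝ}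

lemma tendstoUniformly_integral_probabilityMeasure
    {P : ι → ProbabilityMeasure X} {Q : ProbabilityMeasure X} (hP : Tendsto P L (𝓝 Q))
    (hgK : ∀ t, LipschitzWith K (g t)) (hgC : ∀ t, ‖g t‖ ≤ C) :
    TendstoUniformly (fun n t => ∫ x, g t x ∂(P n : Measure X))
      (fun t => ∫ x, g t x ∂(Q : Measure X)) L := by
  rw [Metric.tendstoUniformly_iff]
  intro η hη
  obtain ⟨ε, hε, hεη⟩ := exists_pos_mul_lt hη (K + 2 * C)
  have hPQ : Tendsto (fun n => levyProkhorovEDist (P n : Measure X) Q) L (𝓝 0) :=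
    tendsto_iff_edist_tendsto_0.1
      ((LevyProkhorov.continuous_ofMeasure_probabilityMeasure.tendsto Q).comp hP)
  filter_upwards [hPQ.eventually_lt_const (ENNReal.ofReal_pos.2 hε)] with n hn t
  rw [dist_comm, Real.dist_eq]
  calc |∫ x, g t x ∂(P n : Measure X) - ∫ x, g t x ∂(Q : Measure X)|
      ≤ ε * (K + 2 * ‖g t‖) :=
        abs_integral_sub_integral_le_of_levyProkhorovEDist_lt hε hn (hgK t)
    _ ≤ (K + 2 * C) * ε := by
        rw [mul_comm]
        gcongr
        exact hgC t
    _ < η := hεη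

lemma tendstoUniformly_integral_finiteMeasure
    {M : ι → FiniteMeasure X} {μ : FiniteMeasure X} (hM : Tendsto M L (𝓝 μ))
    (hgK : ∀ t, LipschitzWith K (g t)) (hgC : ∀ t, ‖g t‖ ≤ C) :
    TendstoUniformly (fun n t => ∫ x, g t x ∂(M n : Measure X))
      (fun t => ∫ x, g t x ∂(μ : Measure X)) L := by
  have integral_bound (m : Measure X) [IsFiniteMeasure m] (t : T) :
      ‖∫ x, g t x ∂m‖ ≤ C * m.real Set.univ :=
    norm_integral_le_of_norm_le_const
      (.of_forall fun x => ((g t).norm_coe_le_norm x).trans (hgC t))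
  have hmass : Tendsto (fun n => ((M n).mass : ℝ)) L (𝓝 μ.mass) := NNReal.tendsto_coe.2 hM.mass
  rcases eq_or_ne μ 0 with rfl | hμ
  · rw [Metric.tendstoUniformly_iff]
    intro η hη
    have : Tendsto (fun n => C * ((M n).mass : ℝ)) L (𝓝 0) := by simpa using hmass.const_mul C
    filter_upwards [this.eventually_lt_const hη] with n hn t
    simpa using (integral_bound (M n) t).trans_lt hn
  have : Nonempty X := by
    by_contra! h
    exact hμ (Subtype.ext (Measure.eq_zero_of_isEmpty _))
  have integral_eq (m : FiniteMeasure X) (t : T) :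
      ∫ x, g t x ∂(m : Measure X) = m.mass * ∫ x, g t x ∂(m.normalize : Measure X) := by
    conv_lhs => rw [m.self_eq_mass_smul_normalize]
    simp [NNReal.smul_def]
  simp only [integral_eq]
  have hpair := hmass.tendstoUniformly_const.prodMk
    (tendstoUniformly_integral_probabilityMeasure
      (FiniteMeasure.tendsto_normalize_of_tendsto hM hμ) hgK hgC)
  have hbounded : Bornology.IsBounded
      (Set.range fun t => ((μ.mass : ℝ), ∫ x, g t x ∂(μ.normalize : Measure X))) :=
    (Bornology.isBounded_singleton.prod isBounded_closedBall).subset <|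
      Set.range_subset_iff.2 fun t =>
        ⟨rfl, mem_closedBall_zero_iff.2 (by simpa using integral_bound μ.normalize t)⟩
  exact tendstoUniformly_continuous_comp
    (fun u hu => (tendsto_id.prodMk tendsto_id).eventually (hpair u hu)) hbounded continuous_mul

end UniformConvergence

lemma tendsto_measure_of_null_frontier_finiteMeasure {ι X : Type*} {L : Filter ι}
    [TopologicalSpace X] [HasOuterApproxClosed X] [MeasurableSpace X] [OpensMeasurableSpace X]
    {M : ι → FiniteMeasure X} {μ : FiniteMeasure X} (hM : Tendsto M L (𝓝 μ)) {S : Set X}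
    (hS : (μ : Measure X) (frontier S) = 0) : Tendsto (fun n => M n S) L (𝓝 (μ S)) := by
  rcases eq_or_ne μ 0 with rfl | hμ
  · have hmass : Tendsto (fun n => (M n).mass) L (𝓝 0) := by simpa using hM.mass
    exact tendsto_of_tendsto_of_tendsto_of_le_of_le tendsto_const_nhds hmass
      (fun n => zero_le) fun n => (M n).apply_le_mass S
  have : Nonempty X := by
    by_contra! h
    exact hμ (Subtype.ext (Measure.eq_zero_of_isEmpty _))
  have hS_normalize : μ.normalize (frontier S) = 0 := by
    rw [μ.normalize_eq_of_nonzero hμ, FiniteMeasure.null_iff_toMeasure_null _ _ |>.2 hS, mul_zero]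
  simp only [FiniteMeasure.self_eq_mass_mul_normalize _ S]
  exact hM.mass.mul (ProbabilityMeasure.tendsto_measure_of_null_frontier_of_tendsto
    (FiniteMeasure.tendsto_normalize_of_tendsto hM hμ) hS_normalize)

lemma exists_boundedContinuous_eq_one_of_compl_mem_nhds {X : Type*} [TopologicalSpace X]
    [NormalSpace X] [RegularSpace X] {x0 : X} {S : Set X} (hS : Sᶜ ∈ 𝓝 x0) :
    ∃ w : X →ᵇ ℝ≥0, (∀ᶠ x in 𝓝 x0, w x = 0) ∧ ∀ x ∈ S, w x = 1 := by
  obtain ⟨U, hU, hU_closed, hUS⟩ := exists_mem_nhds_isClosed_subset (interior_mem_nhds.2 hS)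
  rw [interior_compl, Set.subset_compl_iff_disjoint_right] at hUS
  obtain ⟨w, hwU, hwS, hw⟩ := exists_continuous_zero_one_of_isClosed hU_closed isClosed_closure hUS
  let w' : C(X, ℝ≥0) := ⟨fun x => ⟨w x, (hw x).1⟩, by fun_prop⟩
  refine ⟨.mkOfBound w' 1 fun x y => ?_, ?_, fun x hx => ?_⟩
  · exact Real.dist_le_of_mem_Icc_01 (hw x) (hw y)
  · filter_upwards [hU] with x hx using NNReal.eq (hwU hx)
  · exact NNReal.eq (hwS (subset_closure hx))

section AwayFrom

variable {ι X : Type*} {L : Filter ι} [TopologicalSpace X] [MeasurableSpace X] {x0 : X}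

/-- A measure all of whose mass outside any neighbourhood of `x0` is finite: the limit measures of
regular variation, which may be infinite at the origin `x0`. -/
def FiniteAwayFrom (x0 : X) (μ : Measure X) : Prop :=
  ∀ U ∈ 𝓝 x0, μ Uᶜ ≠ ∞

/-- Convergence of measures away from `x0` (`M_O`-convergence of Hult and Lindskog): convergence of
the integrals of bounded continuous functions vanishing near `x0`. Regular variation of `ν` with
scaling sequence `a` is this convergence for the measures `n • ν.map (a n)⁻¹`. -/
def TendstoAwayFrom (x0 : X) (M : ι → Measure X) (L : Filter ι) (μ : Measure X) : Prop :=
  ∀ h : X →ᵇ ℝ, (∀ᶠ x in 𝓝 x0, h x = 0) →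
    Tendsto (fun n => ∫ x, h x ∂M n) L (𝓝 (∫ x, h x ∂μ))

lemma FiniteAwayFrom.of_isFiniteMeasure (μ : Measure X) [IsFiniteMeasure μ] :
    FiniteAwayFrom x0 μ :=
  fun _ _ => measure_ne_top μ _

lemma FiniteAwayFrom.isFiniteMeasure_restrict {μ : Measure X} (hμ : FiniteAwayFrom x0 μ)
    {S : Set X} (hS : Sᶜ ∈ 𝓝 x0) : IsFiniteMeasure (μ.restrict S) :=
  MeasureTheory.isFiniteMeasure_restrict.2 (compl_compl S ▸ hμ _ hS)

variable {μ : Measure X} {M : ι → Measure X} {w : X →ᵇ ℝ≥0}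

lemma FiniteAwayFrom.lintegral_ne_top (hμ : FiniteAwayFrom x0 μ) (hw : ∀ᶠ x in 𝓝 x0, w x = 0) :
    ∫⁻ x, w x ∂μ ≠ ∞ := by
  have := hμ.isFiniteMeasure_restrict (S := {x | w x = 0}ᶜ) (by rwa [compl_compl])
  have hsupp : ∫⁻ x in {x | w x = 0}ᶜ, w x ∂μ = ∫⁻ x, w x ∂μ :=
    setLIntegral_eq_of_support_subset fun x hx => by simpa using hx
  exact hsupp ▸ (w.lintegral_lt_top_of_nnreal _).ne

/-- The restriction of a measure that is finite away from `x0` to a set `S` staying away from `x0`,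
bundled as a finite measure so that one can speak of weak convergence. -/
noncomputable def FiniteAwayFrom.restrict (hμ : FiniteAwayFrom x0 μ) {S : Set X}
    (hS : Sᶜ ∈ 𝓝 x0) : FiniteMeasure X :=
  ⟨μ.restrict S, hμ.isFiniteMeasure_restrict hS⟩

lemma FiniteAwayFrom.coe_mass_restrict (hμ : FiniteAwayFrom x0 μ) {S : Set X} (hS : Sᶜ ∈ 𝓝 x0) :
    ((hμ.restrict hS).mass : ℝ) = μ.real S :=
  measureReal_restrict_apply_univ S

/-- The measure `w • μ` for `μ` finite away from `x0` and `w` vanishing near `x0`, bundled as a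
finite measure. -/
noncomputable def FiniteAwayFrom.withDensity (hμ : FiniteAwayFrom x0 μ)
    (hw : ∀ᶠ x in 𝓝 x0, w x = 0) : FiniteMeasure X :=
  ⟨μ.withDensity fun x => w x, isFiniteMeasure_withDensity (hμ.lintegral_ne_top hw)⟩

@[simp]
lemma FiniteAwayFrom.toMeasure_restrict (hμ : FiniteAwayFrom x0 μ) {S : Set X}
    (hS : Sᶜ ∈ 𝓝 x0) : (hμ.restrict hS : Measure X) = μ.restrict S :=
  rfl

@[simp]
lemma FiniteAwayFrom.toMeasure_withDensity (hμ : FiniteAwayFrom x0 μ)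
    (hw : ∀ᶠ x in 𝓝 x0, w x = 0) :
    (hμ.withDensity hw : Measure X) = μ.withDensity fun x => w x :=
  rfl

variable [OpensMeasurableSpace X]

lemma TendstoAwayFrom.tendsto_lintegral (h : TendstoAwayFrom x0 M L μ)
    (hM : ∀ n, FiniteAwayFrom x0 (M n)) (hμ : FiniteAwayFrom x0 μ)
    (hw : ∀ᶠ x in 𝓝 x0, w x = 0) :
    Tendsto (fun n => ∫⁻ x, w x ∂M n) L (𝓝 (∫⁻ x, w x ∂μ)) := by
  rw [← ENNReal.tendsto_toReal_iff (fun n => (hM n).lintegral_ne_top hw) (hμ.lintegral_ne_top hw)]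
  simp only [BoundedContinuousFunction.toReal_lintegral_coe_eq_integral]
  exact h (w.comp _ NNReal.isometry_coe.lipschitz) (hw.mono fun x hx => by simp [hx])

lemma TendstoAwayFrom.tendsto_withDensity (h : TendstoAwayFrom x0 M L μ)
    (hM : ∀ n, FiniteAwayFrom x0 (M n)) (hμ : FiniteAwayFrom x0 μ)
    (hw : ∀ᶠ x in 𝓝 x0, w x = 0) :
    Tendsto (fun n => (hM n).withDensity hw) L (𝓝 (hμ.withDensity hw)) := by
  rw [FiniteMeasure.tendsto_iff_forall_lintegral_tendsto]
  intro f
  have lintegral_eq (m : Measure X) :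
      ∫⁻ x, f x ∂(m.withDensity fun x => w x) = ∫⁻ x, (w * f) x ∂m := by
    rw [lintegral_withDensity_eq_lintegral_mul _ (by fun_prop) (by fun_prop)]
    simp
  simp only [FiniteAwayFrom.toMeasure_withDensity, lintegral_eq]
  exact h.tendsto_lintegral hM hμ (hw.mono fun x hx => by simp [hx])

lemma TendstoAwayFrom.tendsto_restrict [NormalSpace X] [RegularSpace X] [HasOuterApproxClosed X]
    (h : TendstoAwayFrom x0 M L μ) (hM : ∀ n, FiniteAwayFrom x0 (M n))
    (hμ : FiniteAwayFrom x0 μ) {S : Set X} (hS_meas : MeasurableSet S) (hS : Sᶜ ∈ 𝓝 x0)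
    (hS_frontier : μ (frontier S) = 0) :
    Tendsto (fun n => (hM n).restrict hS) L (𝓝 (hμ.restrict hS)) := by
  obtain ⟨w, hw0, hwS⟩ := exists_boundedContinuous_eq_one_of_compl_mem_nhds hS
  rw [FiniteMeasure.tendsto_iff_forall_lintegral_tendsto]
  intro f
  have hwf : ∀ᶠ x in 𝓝 x0, (w * f) x = 0 := hw0.mono fun x hx => by simp [hx]
  have setLIntegral_eq (m : Measure X) :
      ∫⁻ x in S, f x ∂m = m.withDensity (fun x => (w * f) x) S := by
    rw [withDensity_apply _ hS_meas]
    exact setLIntegral_congr_fun hS_meas fun x hx => by simp [hwS x hx]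
  simp only [FiniteAwayFrom.toMeasure_restrict, setLIntegral_eq]
  have hlim := tendsto_measure_of_null_frontier_finiteMeasure (h.tendsto_withDensity hM hμ hwf)
    (withDensity_absolutelyContinuous μ _ hS_frontier)
  simpa only [FiniteMeasure.ennreal_coeFn_eq_coeFn_toMeasure,
    FiniteAwayFrom.toMeasure_withDensity] using ENNReal.tendsto_coe.2 hlim

end AwayFrom

lemma tendstoAwayFrom_natCast_smul_map {X Y : Type*} [PseudoMetricSpace X] [MeasurableSpace X]
    [OpensMeasurableSpace X] [MeasurableSpace Y] {x0 : X} {φ : ℕ → Y → X}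
    (hφ : ∀ n, Measurable (φ n)) {ν : Measure Y} {μ : Measure X}
    (hRV : ∀ h : X → ℝ, Continuous h → (∃ C, ∀ x, |h x| ≤ C) →
      (∃ ρ > (0 : ℝ), ∀ x, dist x0 x < ρ → h x = 0) →
      Tendsto (fun n : ℕ => (n : ℝ) * ∫ y, h (φ n y) ∂ν) atTop (𝓝 (∫ x, h x ∂μ))) :
    TendstoAwayFrom x0 (fun n : ℕ => (n : ℝ≥0∞) • ν.map (φ n)) atTop μ := by
  intro h h0
  obtain ⟨ρ, hρ, hρ0⟩ := Metric.eventually_nhds_iff.1 h0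
  have integral_eq (n : ℕ) :
      ∫ x, h x ∂((n : ℝ≥0∞) • ν.map (φ n)) = n * ∫ y, h (φ n y) ∂ν := by
    rw [integral_smul_measure, ENNReal.toReal_natCast, smul_eq_mul, integral_map
      (hφ n).aemeasurable h.continuous.measurable.aestronglyMeasurable]
  simp only [integral_eq]
  exact hRV h h.continuous ⟨‖h‖, h.norm_coe_le_norm⟩
    ⟨ρ, hρ, fun x hx => hρ0 (dist_comm x0 x ▸ hx)⟩

lemma finiteAwayFrom_of_forall_le_dist {X : Type*} [PseudoMetricSpace X] [MeasurableSpace X]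
    {x0 : X} {μ : Measure X} (hμ : ∀ ρ > 0, μ {x | ρ ≤ dist x0 x} ≠ ∞) : FiniteAwayFrom x0 μ := by
  intro U hU
  obtain ⟨ρ, hρ, hρU⟩ := Metric.mem_nhds_iff.1 hU
  refine measure_ne_top_of_subset (fun x hx => ?_) (hμ ρ hρ)
  by_contra! hlt
  exact hx (hρU (mem_ball'.2 (not_le.1 hlt)))

lemma TendstoAwayFrom.tendstoUniformly_setIntegral {ι T X : Type*} {L : Filter ι}
    [PseudoMetricSpace X] [TopologicalSpace.SeparableSpace X] [MeasurableSpace X]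
    [OpensMeasurableSpace X] {x0 : X} {M : ι → Measure X} {μ : Measure X}
    (h : TendstoAwayFrom x0 M L μ) (hM : ∀ n, FiniteAwayFrom x0 (M n)) (hμ : FiniteAwayFrom x0 μ)
    {S : Set X} (hS_meas : MeasurableSet S) (hS : Sᶜ ∈ 𝓝 x0) (hS_frontier : μ (frontier S) = 0)
    {g : T → X → ℝ} {K : ℝ≥0} {C : ℝ} (hgK : ∀ t, LipschitzWith K (g t))
    (hgC : ∀ t x, ‖g t x‖ ≤ C) :
    TendstoUniformly (fun n t => ∫ x in S, g t x ∂M n) (fun t => ∫ x in S, g t x ∂μ) L := by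
  have : Nonempty X := ⟨x0⟩
  let g' (t : T) : X →ᵇ ℝ := .ofNormedAddCommGroup (g t) (hgK t).continuous C (hgC t)
  have hg'C (t : T) : ‖g' t‖ ≤ C := BoundedContinuousFunction.norm_le_of_nonempty.2 (hgC t)
  exact tendstoUniformly_integral_finiteMeasure (g := g')
    (h.tendsto_restrict hM hμ hS_meas hS hS_frontier) hgK hg'C

section PiMeasure

variable {κ : Type*} [Fintype κ] {X : κ → Type*} [∀ i, MeasurableSpace (X i)]

lemma measure_pi_mono {m m' : ∀ i, Measure (X i)} (h : ∀ i, m i ≤ m' i) :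
    Measure.pi m ≤ Measure.pi m' := by
  have outer_le : OuterMeasure.pi (fun i => (m i).toOuterMeasure) ≤
      OuterMeasure.pi fun i => (m' i).toOuterMeasure :=
    OuterMeasure.le_pi.2 fun s _ =>
      (OuterMeasure.pi_pi_le _ s).trans (Finset.prod_le_prod' fun i _ => h i (s i))
  refine Measure.le_intro fun s hs _ => ?_
  rw [Measure.pi, Measure.pi, toMeasure_apply _ _ hs, toMeasure_apply _ _ hs]
  exact outer_le s

variable {m : ∀ i, Measure (X i)} {S : ∀ i, Set (X i)} [∀ i, SigmaFinite ((m i).restrict (S i))]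

/- Mathlib's `Measure.restrict_pi_pi` asks for σ-finite `m i`, which fails for limit measures of
regular variation with infinite mass at the origin. -/
lemma restrict_univ_pi (hS : ∀ i, MeasurableSet (S i)) :
    (Measure.pi m).restrict (Set.univ.pi S) = Measure.pi fun i => (m i).restrict (S i) := by
  refine (Measure.pi_eq fun s hs => ?_).symm
  rw [Measure.restrict_apply (.univ_pi hs), ← Set.pi_inter_distrib]
  apply le_antisymm
  · rw [Measure.pi, toMeasure_apply _ _ (.univ_pi fun i => (hs i).inter (hS i))]
    simp only [Measure.restrict_apply (hs _)]
    exact OuterMeasure.pi_pi_le _ _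
  · calc ∏ i, (m i).restrict (S i) (s i)
        = Measure.pi (fun i => (m i).restrict (S i)) (Set.univ.pi fun i => s i ∩ S i) := by
          simp [Measure.pi_pi, Measure.restrict_apply, hs, hS, MeasurableSet.inter, Set.inter_assoc]
      _ ≤ Measure.pi m (Set.univ.pi fun i => s i ∩ S i) :=
          measure_pi_mono (fun _ => Measure.restrict_le_self) _

lemma setIntegral_univ_pi_prod (hS : ∀ i, MeasurableSet (S i)) (g : ∀ i, X i → ℝ) :
    ∫ x in Set.univ.pi S, ∏ i, g i (x i) ∂Measure.pi m = ∏ i, ∫ x in S i, g i x ∂m i := by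
  rw [restrict_univ_pi hS, integral_fintype_prod_eq_prod]

end PiMeasure

lemma lipschitzWith_exp_neg {X : Type*} [PseudoEMetricSpace X] {K : ℝ≥0} {f : X → ℝ}
    (hf : LipschitzWith K f) (hf0 : ∀ x, 0 ≤ f x) : LipschitzWith K fun x => Real.exp (-f x) := by
  have exp_lipschitzOn : LipschitzOnWith 1 Real.exp (Set.Iic 0) :=
    (convex_Iic 0).lipschitzOnWith_of_nnnorm_deriv_le (fun _ _ => Real.differentiableAt_exp)
      fun x hx => by
        rw [Real.deriv_exp, ← NNReal.coe_le_coe]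
        simpa using hx
  have hcomp := exp_lipschitzOn.comp hf.neg.lipschitzOnWith (s := Set.univ)
    fun x _ => neg_nonpos.2 (hf0 x)
  rwa [lipschitzOnWith_univ, one_mul] at hcomp

lemma setIntegral_exp_neg_sum_eq_prod {T X κ : Type*} [Fintype κ] [MeasurableSpace X]
    {m : Measure X} {S : Set X} [SigmaFinite (m.restrict S)] (hS : MeasurableSet S)
    (f : T × X → ℝ) (t : κ → T) :
    ∫ x : κ → X in {x | ∀ i, x i ∈ S}, Real.exp (-∑ i, f (t i, x i)) ∂(Measure.pi fun _ => m) =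
      ∏ i, ∫ x in S, Real.exp (-f (t i, x)) ∂m := by
  have set_eq : {x : κ → X | ∀ i, x i ∈ S} = Set.univ.pi fun _ => S := by
    ext; simp
  simp only [set_eq, ← Finset.sum_neg_distrib, Real.exp_sum]
  exact setIntegral_univ_pi_prod (fun _ => hS) fun i x => Real.exp (-f (t i, x))

lemma tendstoUniformly_finsetProd {ι T κ : Type*} [Fintype κ] {L : Filter ι} {F : ι → T → ℝ}
    {G : T → ℝ} {C : ℝ} (hF : TendstoUniformly F G L) (hG : ∀ t, ‖G t‖ ≤ C) :
    TendstoUniformly (fun n (t : κ → T) => ∏ i, F n (t i)) (fun t => ∏ i, G (t i)) L := by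
  have hF_pi : TendstoUniformly (fun n (t : κ → T) i => F n (t i)) (fun t i => G (t i)) L := by
    rw [Metric.tendstoUniformly_iff] at hF ⊢
    intro ε hε
    filter_upwards [hF ε hε] with n hn t
    exact (dist_pi_lt_iff hε).2 fun i => hn (t i)
  have hG_bounded : Bornology.IsBounded (Set.range fun (t : κ → T) i => G (t i)) :=
    (Bornology.IsBounded.pi fun _ => isBounded_closedBall (x := (0 : ℝ)) (r := C)).subset <|
      Set.range_subset_iff.2 fun t i _ => mem_closedBall_zero_iff.2 (hG (t i))
  exact tendstoUniformly_continuous_comp hF_pi hG_bounded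
    (continuous_finsetProd _ fun i _ => continuous_apply i)

lemma norm_exp_neg_le_one {y : ℝ} (hy : 0 ≤ y) : ‖Real.exp (-y)‖ ≤ 1 := by
  rwa [Real.norm_eq_abs, Real.abs_exp, Real.exp_le_one_iff, neg_nonpos]

lemma norm_integral_exp_neg_le {X : Type*} [MeasurableSpace X] (m : Measure X) [IsFiniteMeasure m]
    {u : X → ℝ} (hu : ∀ x, 0 ≤ u x) : ‖∫ x, Real.exp (-u x) ∂m‖ ≤ m.real Set.univ := by
  simpa only [one_mul] using
    norm_integral_le_of_norm_le_const (μ := m) (.of_forall fun x => norm_exp_neg_le_one (hu x))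

lemma TendstoAwayFrom.tendstoUniformly_setIntegral_exp_neg_sum {ι T X κ : Type*} [Fintype κ]
    {L : Filter ι} [PseudoMetricSpace X] [TopologicalSpace.SeparableSpace X] [MeasurableSpace X]
    [OpensMeasurableSpace X] {x0 : X} {M : ι → Measure X} {μ : Measure X} {S : Set X}
    {f : T × X → ℝ} (h : TendstoAwayFrom x0 M L μ) (hM : ∀ n, FiniteAwayFrom x0 (M n))
    (hμ : FiniteAwayFrom x0 μ) (hS_meas : MeasurableSet S) (hS : Sᶜ ∈ 𝓝 x0)
    (hS_frontier : μ (frontier S) = 0)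
    (hf0 : ∀ z, 0 ≤ f z) {K : ℝ≥0} (hfK : ∀ t, LipschitzWith K fun x => f (t, x)) :
    TendstoUniformly
      (fun n (t : κ → T) =>
        ∫ x in {x | ∀ i, x i ∈ S}, Real.exp (-∑ i, f (t i, x i)) ∂(Measure.pi fun _ => M n))
      (fun t => ∫ x in {x | ∀ i, x i ∈ S}, Real.exp (-∑ i, f (t i, x i)) ∂(Measure.pi fun _ => μ))
      L := by
  have := hμ.isFiniteMeasure_restrict hS
  have (n : ι) := (hM n).isFiniteMeasure_restrict hS
  simp only [setIntegral_exp_neg_sum_eq_prod hS_meas]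
  exact tendstoUniformly_finsetProd
    (h.tendstoUniformly_setIntegral hM hμ hS_meas hS hS_frontier
      (fun t => lipschitzWith_exp_neg (hfK t) fun x => hf0 (t, x))
      fun t x => norm_exp_neg_le_one (hf0 (t, x)))
    fun t => norm_integral_exp_neg_le (μ.restrict S) fun x => hf0 (t, x)

lemma abs_setIntegral_exp_neg_sum_le {T X κ : Type*} [Fintype κ] [MeasurableSpace X]
    {m : Measure X} {S : Set X} [IsFiniteMeasure (m.restrict S)] {f : T × X → ℝ}
    (hS : MeasurableSet S) (hf0 : ∀ z, 0 ≤ f z) (t : κ → T) :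
    |∫ x in {x | ∀ i, x i ∈ S}, Real.exp (-∑ i, f (t i, x i)) ∂(Measure.pi fun _ : κ => m)| ≤
      m.real S ^ Fintype.card κ := by
  rw [setIntegral_exp_neg_sum_eq_prod hS, Finset.abs_prod]
  calc ∏ i, |∫ x in S, Real.exp (-f (t i, x)) ∂m| ≤ ∏ _i : κ, m.real S :=
        Finset.prod_le_prod (fun _ _ => abs_nonneg _) fun i _ => by
          simpa using norm_integral_exp_neg_le (m.restrict S) fun x => hf0 (t i, x)
    _ = m.real S ^ Fintype.card κ := by rw [Finset.prod_const, Finset.card_univ]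

theorem stmt_9_general {T X Y κ : Type*} [PseudoMetricSpace X] [TopologicalSpace.SeparableSpace X]
    [MeasurableSpace X] [OpensMeasurableSpace X] [MeasurableSpace Y] [Fintype κ] {x0 : X}
    {φ : ℕ → Y → X} (hφ : ∀ n, Measurable (φ n)) {ν : Measure Y} [IsFiniteMeasure ν]
    {μ : Measure X} (hμFin : ∀ ρ > (0 : ℝ), μ {x | ρ ≤ dist x0 x} ≠ ∞)
    (hRV : ∀ h : X → ℝ, Continuous h → (∃ C, ∀ x, |h x| ≤ C) →
      (∃ ρ > (0 : ℝ), ∀ x, dist x0 x < ρ → h x = 0) →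
      Tendsto (fun n : ℕ => (n : ℝ) * ∫ y, h (φ n y) ∂ν) atTop (𝓝 (∫ x, h x ∂μ)))
    {r : ℝ} (hr : 0 < r) (hrcont : μ {x | dist x0 x = r} = 0)
    {f : T × X → ℝ} (hf0 : ∀ z, 0 ≤ f z) {K : ℝ≥0}
    (hfK : ∀ t, LipschitzWith K fun x => f (t, x)) :
    TendstoUniformly
      (fun (n : ℕ) (t : κ → T) => ∫ x in {x | ∀ i, r ≤ dist x0 (x i)}, Real.exp (-∑ i, f (t i, x i))
        ∂(Measure.pi fun _ => (n : ℝ≥0∞) • ν.map (φ n)))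
      (fun t => ∫ x in {x | ∀ i, r ≤ dist x0 (x i)}, Real.exp (-∑ i, f (t i, x i))
        ∂(Measure.pi fun _ => μ))
      atTop ∧
    ∃ C : ℝ, ∀ (n : ℕ) (t : κ → T),
      |∫ x in {x | ∀ i, r ≤ dist x0 (x i)}, Real.exp (-∑ i, f (t i, x i))
        ∂(Measure.pi fun _ => (n : ℝ≥0∞) • ν.map (φ n))| ≤ C := by
  have hconv := tendstoAwayFrom_natCast_smul_map hφ hRV
  have (n : ℕ) : IsFiniteMeasure ((n : ℝ≥0∞) • ν.map (φ n)) :=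
    Measure.smul_finite _ (ENNReal.natCast_ne_top n)
  have hfin (n : ℕ) : FiniteAwayFrom x0 ((n : ℝ≥0∞) • ν.map (φ n)) := .of_isFiniteMeasure _
  have hμ := finiteAwayFrom_of_forall_le_dist hμFin
  have hcont : Continuous fun x => dist x0 x := by fun_prop
  set S : Set X := {x | r ≤ dist x0 x}
  have hS_meas : MeasurableSet S := (isClosed_le continuous_const hcont).measurableSet
  have hS : Sᶜ ∈ 𝓝 x0 := by
    simpa [S, Set.compl_ofPred] using
      (isOpen_lt hcont continuous_const).mem_nhds (by simpa using hr)
  have hS_frontier : μ (frontier S) = 0 :=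
    measure_mono_null (frontier_le_subset_eq continuous_const hcont)
      (by simpa only [eq_comm (a := r)])
  refine ⟨hconv.tendstoUniformly_setIntegral_exp_neg_sum hfin hμ hS_meas hS hS_frontier hf0 hfK, ?_⟩
  obtain ⟨B, hB⟩ := (hconv.tendsto_restrict hfin hμ hS_meas hS hS_frontier).mass.bddAbove_range
  refine ⟨(B : ℝ) ^ Fintype.card κ, fun n t => ?_⟩
  have hmass : ((n : ℝ≥0∞) • ν.map (φ n)).real S ≤ B := by
    rw [← (hfin n).coe_mass_restrict hS]
    exact NNReal.coe_le_coe.2 (hB (Set.mem_range_self n))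
  exact (abs_setIntegral_exp_neg_sum_le hS_meas hf0 t).trans (by gcongr)

/-- Uniform convergence and uniform boundedness of `L_{k+1,n} f`
(Lemma 5.7 of the paper). -/
theorem stmt_9
    {T : Type*} [MetricSpace T] [CompleteSpace T] [TopologicalSpace.SeparableSpace T]
    [LocallyCompactSpace T]
    {X : Type*} [MetricSpace X] [CompleteSpace X] [TopologicalSpace.SeparableSpace X]
    [MeasurableSpace X] [BorelSpace X]
    (x0 : X) (σ : ℝ → X → X)
    (hσc : ContinuousOn (fun p : ℝ × X => σ p.1 p.2) (Set.Ioi (0 : ℝ) ×ˢ Set.univ))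
    (hσ1 : ∀ x, σ 1 x = x)
    (hσm : ∀ u v : ℝ, 0 < u → 0 < v → ∀ x, σ u (σ v x) = σ (u * v) x)
    (hσ0 : ∀ u : ℝ, 0 < u → σ u x0 = x0)
    (ν : Measure X) [IsProbabilityMeasure ν] (hν0 : ν {x0} = 0)
    (a : ℕ → ℝ) (ha : ∀ n, 0 < a n) (haTop : Tendsto a atTop atTop)
    (μ : Measure X) (hμ0 : μ ≠ 0)
    (hμFin : ∀ ρ > (0 : ℝ), μ {x | ρ ≤ dist x0 x} ≠ ⊤)
    (hRV : ∀ h : X → ℝ, Continuous h → (∃ C, ∀ x, |h x| ≤ C) →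
      (∃ ρ > (0 : ℝ), ∀ x, dist x0 x < ρ → h x = 0) →
      Tendsto (fun n : ℕ => (n : ℝ) * ∫ x, h (σ (a n)⁻¹ x) ∂ν) atTop (𝓝 (∫ x, h x ∂μ)))
    (k : ℕ) (r : ℝ) (hr : 0 < r) (hrcont : μ {x | dist x0 x = r} = 0)
    (f : T × X → ℝ) (hf0 : ∀ z, 0 ≤ f z) (hfb : ∃ C, ∀ z, f z ≤ C)
    (hfLip : ∃ K : NNReal, LipschitzWith K f)
    (hfvan : ∀ t x, dist x0 x < r → f (t, x) = 0) :
    TendstoUniformly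
      (fun n : ℕ => fun t : Fin (k + 1) → T =>
        ∫ x : Fin (k + 1) → X in {x | ∀ i, r ≤ dist x0 (x i)},
          Real.exp (-∑ i, f (t i, x i))
          ∂(Measure.pi fun _ : Fin (k + 1) =>
              (n : ENNReal) • Measure.map (fun x => σ (a n)⁻¹ x) ν))
      (fun t : Fin (k + 1) → T =>
        ∫ x : Fin (k + 1) → X in {x | ∀ i, r ≤ dist x0 (x i)},
          Real.exp (-∑ i, f (t i, x i)) ∂(Measure.pi fun _ : Fin (k + 1) => μ))
      atTop
    ∧ ∃ C : ℝ, ∀ (n : ℕ) (t : Fin (k + 1) → T),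
        |∫ x : Fin (k + 1) → X in {x | ∀ i, r ≤ dist x0 (x i)},
            Real.exp (-∑ i, f (t i, x i))
            ∂(Measure.pi fun _ : Fin (k + 1) =>
                (n : ENNReal) • Measure.map (fun x => σ (a n)⁻¹ x) ν)| ≤ C := by
  obtain ⟨K, hfK⟩ := hfLip
  have hσ_meas (n : ℕ) : Measurable (σ (a n)⁻¹) :=
    (hσc.comp_continuous (f := fun x : X => ((a n)⁻¹, x)) (by fun_prop)
      fun _ => ⟨inv_pos.2 (ha n), trivial⟩).measurable
  exact stmt_9_general hσ_meas hμFin hRV hr hrcont hf0 fun t =>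
    hfK.comp (LipschitzWith.prodMk_left t)
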